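/- Let p be a prime, V a p-torsion-free valuation domain of Krull dimension 1 that is Witt-perfect and admits a compatible system of p-power roots p^{1/p^n} ∈ V, and A a p-torsion-free flat V-algebra with a nonzero divisor g ∈ A admitting a compatible system of p-power roots g^{1/p^n} ∈ A. Assume: (1) p lies in the Jacobson radical of A and A is completely integrally closed in A[1/p]; (2) A is (pg)^{1/p^∞}-almost Witt-perfect and is integral over a Noetherian subring; (3) (p,g) is a regular sequence on A. Then, inside A[1/(pg)], the integral closure of A in A[1/(pg)] coincides with the complete integral closure of A in A[1/(pg)], and both are equal to the intersection ⋂_{j>0} A^{j∘}. Moreover, if A is completely integrally closed in A[1/(pg)], then A = ⋂_{j>0} A^{j∘} and A = {x ∈ A[1/g] : g^{1/p^n}·x ∈ A for all n > 0}. -/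

import Mathlib

/-- An element `x` of an `R`-algebra `B` is almost integral over `R` if all its powers lie in a
single finitely generated `R`-submodule of `B`. -/
def IsAlmostIntegralElem (R : Type*) {B : Type*} [CommRing R] [CommRing B] [Algebra R B]
    (x : B) : Prop :=
  ∃ M : Submodule R B, M.FG ∧ ∀ n : ℕ, x ^ n ∈ M

/-- `R` is completely integrally closed in the `R`-algebra `B` if every element of `B` that is
almost integral over `R` lies in the image of `R`. -/
def IsCompletelyIntegrallyClosedIn (R B : Type*) [CommRing R] [CommRing B] [Algebra R B] : Prop :=
  ∀ x : B, IsAlmostIntegralElem R x → x ∈ (algebraMap R B).range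

/-- A `p`-torsion-free ring `A` is Witt-perfect if the Frobenius endomorphism of `A/pA` is
surjective and for every `a ∈ A` there is `b ∈ A` with `b^p ≡ p·a (mod p²A)`. -/
def IsWittPerfect (p : ℕ) (A : Type*) [CommRing A] : Prop :=
  (∀ a : A, ∃ b c : A, a - b ^ p = p * c) ∧
  (∀ a : A, ∃ b c : A, b ^ p - p * a = (p : A) ^ 2 * c)

/-- `(pg)^{1/p^∞}`-almost Witt-perfectness, where `pga n` denotes
`(pg)^{1/p^n} = p^{1/p^n}·g^{1/p^n}`. -/
def IsAlmostWittPerfect (p : ℕ) {A : Type*} [CommRing A] (pga : ℕ → A) : Prop :=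
  (∀ a : A, ∀ n : ℕ, 0 < n → ∃ b c : A, pga n * a - b ^ p = p * c) ∧
  (∀ a : A, ∀ n : ℕ, 0 < n → ∃ b c : A, b ^ p - p * (pga n * a) = (p : A) ^ 2 * c)

/-!
To show that `⋂ A^{j∘}` consists of integral elements, suppose `x` is not integral over `A`. After
passing to a residue field `K` of `A[1/(pg)]`, there is a valuation ring `W` of `K` containing the
image of `A` and having both `p` and `x⁻¹` in its maximal ideal. One of `p`, `x⁻¹` divides the other
in `W`, so adjoining the quotient and `g` to the Noetherian ring below `A` and localizing at a prime
minimal over the divisor yields, by Krull's principal ideal theorem, a local domain `D ⊆ K` of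
dimension at most one with `p`, `x⁻¹` in its maximal ideal, over which `A` is integral. In `D` a
high power of `p` is divisible by `g`, so `A[p^j/g]` is integral over `D` for large `j`; and a high
power of `x⁻¹` is divisible by `p^m`, so boundedness of `p^m x^n` makes `x` integral over `D`. Then
`x⁻¹` is a unit of `D`, a contradiction.
-/

section PowerBounded

variable {A B : Type*} [CommRing A] [CommRing B] [Algebra A B]

variable (A) in
/-- The set `A^{j∘}`: the elements of `B` whose powers become members of `A[ϖ^j/g]` after
multiplication by one fixed power of `ϖ`. Here `ginv` stands for `1/g`; geometrically, these are the
functions that are power-bounded on the locus `|ϖ^j| ≤ |g|`. -/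
def powerBoundedOn (ϖ ginv : B) (j : ℕ) : Set B :=
  {x | ∃ m : ℕ, ∀ n : ℕ, ϖ ^ m * x ^ n ∈ Algebra.adjoin A {ϖ ^ j * ginv}}

theorem map_mem_powerBoundedOn {C : Type*} [CommRing C] [Algebra A C] (φ : B →ₐ[A] C)
    {ϖ ginv x : B} {j : ℕ} (hx : x ∈ powerBoundedOn A ϖ ginv j) :
    φ x ∈ powerBoundedOn A (φ ϖ) (φ ginv) j := by
  obtain ⟨m, hm⟩ := hx
  refine ⟨m, fun n => ?_⟩
  have h : φ (ϖ ^ m * x ^ n) ∈ (Algebra.adjoin A {ϖ ^ j * ginv}).map φ := ⟨_, hm n, rfl⟩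
  simpa only [AlgHom.map_adjoin, Set.image_singleton, map_mul, map_pow] using h

theorem isAlmostIntegralElem_of_isIntegral {x : B} (hx : IsIntegral A x) :
    IsAlmostIntegralElem A x :=
  ⟨_, hx.fg_adjoin_singleton, fun n => pow_mem (Algebra.self_mem_adjoin_singleton A x) n⟩

theorem IsAlmostIntegralElem.exists_pow_mul_mem_range (s : A) [IsLocalization.Away s B] {x : B}
    (hx : IsAlmostIntegralElem A x) :
    ∃ N : ℕ, ∀ n : ℕ, algebraMap A B s ^ N * x ^ n ∈ (algebraMap A B).range := by
  obtain ⟨M, hM, hxM⟩ := hx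
  obtain ⟨_, ⟨N, rfl⟩, hN⟩ := FractionalIdeal.isFractional_of_fg (S := Submonoid.powers s) hM
  refine ⟨N, fun n => ?_⟩
  obtain ⟨a, ha⟩ := hN _ (hxM n)
  exact ⟨a, by rw [ha, Algebra.smul_def, map_pow]⟩

theorem IsAlmostIntegralElem.mem_powerBoundedOn {ϖ g : A} [IsLocalization.Away (ϖ * g) B]
    {ginv : B} (hginv : ginv * algebraMap A B g = 1) {x : B} (hx : IsAlmostIntegralElem A x)
    (j : ℕ) : x ∈ powerBoundedOn A (algebraMap A B ϖ) ginv j := by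
  obtain ⟨N, hN⟩ := hx.exists_pow_mul_mem_range (ϖ * g)
  refine ⟨N + j * N, fun n => ?_⟩
  obtain ⟨a, ha⟩ := hN n
  have h : algebraMap A B ϖ ^ (N + j * N) * x ^ n
      = (algebraMap A B ϖ ^ j * ginv) ^ N * algebraMap A B a := by
    have hgN : ginv ^ N * algebraMap A B g ^ N = 1 := by rw [← mul_pow, hginv, one_pow]
    rw [ha, map_mul, mul_pow, mul_pow, pow_add, pow_mul]
    linear_combination (-algebraMap A B ϖ ^ N * (algebraMap A B ϖ ^ j) ^ N * x ^ n) * hgN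
  rw [h]
  exact mul_mem (pow_mem (Algebra.self_mem_adjoin_singleton A _) N)
    (Subalgebra.algebraMap_mem _ a)

-- The powers `x ^ k` all lie in `A · g⁻¹`, since `g = (g^{1/q^n})^{q^n}` and `k ≤ q ^ n` for
-- large `n`.
theorem isAlmostIntegralElem_of_forall_root_mul_mem {q : ℕ} (hq : 1 < q) {r : ℕ → A}
    (hr : ∀ n, r (n + 1) ^ q = r n) {ginv : B} (hginv : ginv * algebraMap A B (r 0) = 1) {x : B}
    (hx : ∀ n, 0 < n → algebraMap A B (r n) * x ∈ Set.range (algebraMap A B)) :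
    IsAlmostIntegralElem A x := by
  have hroot : ∀ n, r n ^ q ^ n = r 0 := fun n => by
    induction n with
    | zero => rw [pow_zero, pow_one]
    | succ n ih => rw [pow_succ', pow_mul, hr, ih]
  refine ⟨Submodule.span A {ginv}, Submodule.fg_span_singleton _, fun k => ?_⟩
  obtain ⟨a, ha⟩ := hx (k + 1) k.succ_pos
  have hk : k ≤ q ^ (k + 1) := k.le_succ.trans (Nat.lt_pow_self hq).le
  have h : algebraMap A B (r (k + 1) ^ (q ^ (k + 1) - k) * a ^ k)
      = algebraMap A B (r 0) * x ^ k := by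
    rw [map_mul, map_pow, map_pow, ha, mul_pow, ← mul_assoc, ← pow_add, Nat.sub_add_cancel hk,
      ← map_pow, hroot]
  refine Submodule.mem_span_singleton.mpr ⟨r (k + 1) ^ (q ^ (k + 1) - k) * a ^ k, ?_⟩
  rw [Algebra.smul_def, h]
  linear_combination x ^ k * hginv

theorem IsCompletelyIntegrallyClosedIn.range_algebraMap (h : IsCompletelyIntegrallyClosedIn A B) :
    Set.range (algebraMap A B) = {x | IsAlmostIntegralElem A x} :=
  subset_antisymm
    (Set.range_subset_iff.mpr fun _ => isAlmostIntegralElem_of_isIntegral isIntegral_algebraMap) h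

theorem IsCompletelyIntegrallyClosedIn.mem_range_iff_forall_root_mul_mem
    (h : IsCompletelyIntegrallyClosedIn A B) {q : ℕ} (hq : 1 < q) {r : ℕ → A}
    (hr : ∀ n, r (n + 1) ^ q = r n) {ginv : B} (hginv : ginv * algebraMap A B (r 0) = 1) {x : B} :
    x ∈ Set.range (algebraMap A B) ↔
      ∀ n, 0 < n → algebraMap A B (r n) * x ∈ Set.range (algebraMap A B) := by
  refine ⟨?_, fun hx => h x (isAlmostIntegralElem_of_forall_root_mul_mem hq hr hginv hx)⟩
  rintro ⟨a, rfl⟩ n -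
  exact ⟨r n * a, map_mul _ _ _⟩

end PowerBounded

theorem adjoin_toSubring_le {R K : Type*} [CommRing R] [CommRing K] [Algebra R K] {S : Subring K}
    (hR : ∀ r : R, algebraMap R K r ∈ S) {s : Set K} (hs : s ⊆ S) :
    (Algebra.adjoin R s).toSubring ≤ S := by
  rw [Algebra.adjoin_eq_ring_closure, Subring.closure_le]
  exact Set.union_subset (Set.range_subset_iff.mpr hR) hs

section DimensionOne

variable {D K : Type*} [CommRing D] [Field K] [Algebra D K]

theorem exists_dvd_pow_of_mem_maximalIdeal [IsDomain D] [IsLocalRing D] [Ring.KrullDimLE 1 D]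
    {a c : D} (ha : a ∈ IsLocalRing.maximalIdeal D) (hc : c ≠ 0) : ∃ n : ℕ, c ∣ a ^ n := by
  have hrad : a ∈ (Ideal.span {c}).radical := by
    rw [Ideal.radical_eq_sInf, Submodule.mem_sInf]
    rintro J ⟨hJ, hJprime⟩
    have hJbot : J ≠ ⊥ := by
      rintro rfl
      exact hc (by simpa using hJ)
    rwa [IsLocalRing.eq_maximalIdeal (hJprime.isMaximal_of_ne_bot hJbot)]
  obtain ⟨n, hn⟩ := hrad
  exact ⟨n, Ideal.mem_span_singleton.mp hn⟩

theorem isUnit_of_isIntegral_inv [FaithfulSMul D K] {u : D} (hu : u ≠ 0)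
    (h : IsIntegral D (algebraMap D K u)⁻¹) : IsUnit u := by
  have hu' : algebraMap D K u ≠ 0 := by simpa using hu
  have hunit : IsUnit (algebraMap D (integralClosure D K) u) :=
    .of_mul_eq_one ⟨_, h⟩ (Subtype.ext (mul_inv_cancel₀ hu'))
  have : FaithfulSMul D (integralClosure D K) := (faithfulSMul_iff_algebraMap_injective D _).mpr <|
    .of_comp (f := algebraMap (integralClosure D K) K) (FaithfulSMul.algebraMap_injective D K)
  exact isUnit_of_map_unit (algebraMap D (integralClosure D K)) u hunit

theorem not_forall_isIntegral_mul_inv_pow [IsDomain D] [IsLocalRing D] [Ring.KrullDimLE 1 D]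
    [FaithfulSMul D K] {c u : D} (hc : c ≠ 0) (hu : u ∈ IsLocalRing.maximalIdeal D) (hu0 : u ≠ 0) :
    ¬ ∀ n : ℕ, IsIntegral D (algebraMap D K c * (algebraMap D K u)⁻¹ ^ n) := by
  intro h
  obtain ⟨n, e, he⟩ := exists_dvd_pow_of_mem_maximalIdeal hu hc
  have hinv : (algebraMap D K u)⁻¹
      = algebraMap D K e * (algebraMap D K c * (algebraMap D K u)⁻¹ ^ (n + 1)) := by
    have hu' : algebraMap D K u ≠ 0 := by simpa using hu0
    rw [← mul_assoc, ← map_mul, mul_comm e c, ← he, map_pow, pow_succ, ← mul_assoc, ← mul_pow,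
      mul_inv_cancel₀ hu', one_pow, one_mul]
  exact hu (isUnit_of_isIntegral_inv (K := K) hu0 (hinv ▸ isIntegral_algebraMap.mul (h (n + 1))))

theorem exists_inv_notMem_powerBoundedOn [IsDomain D] [IsLocalRing D] [Ring.KrullDimLE 1 D]
    [FaithfulSMul D K] {A : Type*} [CommRing A] [Algebra A K]
    (hA : ∀ a : A, IsIntegral D (algebraMap A K a)) {ϖ u γ : D}
    (hϖ : ϖ ∈ IsLocalRing.maximalIdeal D) (hϖ0 : ϖ ≠ 0)
    (hu : u ∈ IsLocalRing.maximalIdeal D) (hu0 : u ≠ 0) (hγ : γ ≠ 0) :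
    ∃ j, 0 < j ∧
      (algebraMap D K u)⁻¹ ∉ powerBoundedOn A (algebraMap D K ϖ) (algebraMap D K γ)⁻¹ j := by
  obtain ⟨j, c, hc⟩ := exists_dvd_pow_of_mem_maximalIdeal hϖ hγ
  refine ⟨j + 1, j.succ_pos, fun ⟨m, hm⟩ => ?_⟩
  have hgen : algebraMap D K ϖ ^ (j + 1) * (algebraMap D K γ)⁻¹ = algebraMap D K (ϖ * c) := by
    have hγ' : algebraMap D K γ ≠ 0 := by simpa using hγ
    rw [← map_pow, pow_succ, hc, map_mul, map_mul, map_mul]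
    field_simp
  refine not_forall_isIntegral_mul_inv_pow (K := K) (pow_ne_zero m hϖ0) hu hu0 fun n => ?_
  rw [map_pow]
  have hs : algebraMap D K ϖ ^ (j + 1) * (algebraMap D K γ)⁻¹ ∈ integralClosure D K :=
    hgen ▸ isIntegral_algebraMap
  exact adjoin_toSubring_le (S := (integralClosure D K).toSubring) hA
    (Set.singleton_subset_iff.mpr hs) (hm n)

end DimensionOne

section LocalSubring

variable {K : Type*} [Field K]

theorem exists_localSubring_krullDimLE_one_of_not_isUnit {S : Subring K} [IsNoetherianRing S]
    {t : S} (ht : ¬ IsUnit t) :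
    ∃ D : LocalSubring K, S ≤ D.toSubring ∧ Ring.KrullDimLE 1 D.toSubring ∧
      (t : K) ∈ Subtype.val '' (IsLocalRing.maximalIdeal D.toSubring : Set D.toSubring) := by
  obtain ⟨P, hP⟩ := Ideal.nonempty_minimalPrimes (mt Ideal.span_singleton_eq_top.mp ht)
  have : P.IsPrime := hP.isPrime
  have hheight := Ideal.height_le_one_of_isPrincipal_of_mem_minimalPrimes _ P hP
  have htP : t ∈ P := hP.1.2 (Ideal.mem_span_singleton_self t)
  let D := LocalSubring.ofPrime S P
  refine ⟨D, LocalSubring.le_ofPrime S P, ?_, algebraMap S D.toSubring t, ?_, rfl⟩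
  · rw [Ring.krullDimLE_iff, IsLocalization.AtPrime.ringKrullDim_eq_height P D.toSubring]
    exact_mod_cast hheight
  · exact (IsLocalization.AtPrime.to_map_mem_maximal_iff D.toSubring P t).mpr htP

variable {W : ValuationSubring K} {T : Subring K} [IsNoetherianRing T]

theorem exists_localSubring_krullDimLE_one_of_mul (hTW : T ≤ W.toSubring) {b c : K}
    (hb : b ∈ W.nonunits) (hc : c ∈ W) :
    ∃ D : LocalSubring K, T ≤ D.toSubring ∧ Ring.KrullDimLE 1 D.toSubring ∧
      {b, b * c} ⊆ Subtype.val '' (IsLocalRing.maximalIdeal D.toSubring : Set D.toSubring) := by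
  let S : Subalgebra T K := Algebra.adjoin T {b, c}
  have : IsNoetherianRing S.toSubring :=
    isNoetherianRing_of_fg (Subalgebra.fg_def.mpr ⟨{b, c}, Set.toFinite _, rfl⟩)
  have hbS : b ∈ S := Algebra.subset_adjoin (Set.mem_insert _ _)
  have hcS : c ∈ S := Algebra.subset_adjoin (Set.mem_insert_of_mem _ rfl)
  have hSW : S.toSubring ≤ W.toSubring := adjoin_toSubring_le (fun t => hTW t.2)
    (Set.pair_subset (W.nonunits_subset hb) hc)
  have hbunit : ¬ IsUnit (⟨b, hbS⟩ : S.toSubring) := fun h =>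
    ValuationSubring.coe_mem_nonunits_iff.mp hb (h.map (Subring.inclusion hSW))
  obtain ⟨D, hSD, hdim, d, hd, hdb⟩ := exists_localSubring_krullDimLE_one_of_not_isUnit hbunit
  refine ⟨D, fun t ht => hSD (S.algebraMap_mem ⟨t, ht⟩), hdim, Set.pair_subset ⟨d, hd, hdb⟩ ?_⟩
  exact ⟨d * ⟨c, hSD hcS⟩, Ideal.mul_mem_right _ _ hd, congrArg (· * c) hdb⟩

theorem exists_localSubring_krullDimLE_one (hTW : T ≤ W.toSubring) {a b : K}
    (ha : a ∈ W.nonunits) (hb : b ∈ W.nonunits) :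
    ∃ D : LocalSubring K, T ≤ D.toSubring ∧ Ring.KrullDimLE 1 D.toSubring ∧
      {a, b} ⊆ Subtype.val '' (IsLocalRing.maximalIdeal D.toSubring : Set D.toSubring) := by
  obtain ⟨c, hc⟩ | ⟨c, hc⟩ := ValuationRing.dvd_total
    (⟨a, W.nonunits_subset ha⟩ : W) ⟨b, W.nonunits_subset hb⟩
  · obtain rfl : b = a * c := congrArg Subtype.val hc
    exact exists_localSubring_krullDimLE_one_of_mul hTW ha c.2
  · obtain rfl : a = b * c := congrArg Subtype.val hc
    rw [Set.pair_comm]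
    exact exists_localSubring_krullDimLE_one_of_mul hTW hb c.2

end LocalSubring

section Integrality

variable {A : Type*} [CommRing A]

theorem isIntegral_of_idealMap_adjoin_inv_sup_span_eq_top {K : Type*} [Field K] [Algebra A K]
    {x : K} {I : Ideal A} (hI : I ≤ (⊥ : Ideal A).jacobson) (hx : x ≠ 0)
    (h : I.map (algebraMap A (Algebra.adjoin A {x⁻¹})) ⊔
      Ideal.span {⟨x⁻¹, Algebra.self_mem_adjoin_singleton A x⁻¹⟩} = ⊤) : IsIntegral A x := by
  have : Nontrivial A := (algebraMap A K).domain_nontrivial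
  have hItop : I ≠ ⊤ := by
    rintro rfl
    exact bot_ne_top (Ideal.jacobson_eq_top_iff.mp (top_le_iff.mp hI))
  let := invertibleOfNonzero (inv_ne_zero hx)
  obtain ⟨f, hf, hfx⟩ :=
    Algebra.exists_aeval_invOf_eq_zero_of_idealMap_adjoin_sup_span_eq_top x⁻¹ I hItop h
  have hunit : IsUnit f.leadingCoeff := by
    simpa using Ideal.mem_jacobson_bot.mp (hI hf) 1
  rw [invOf_eq_inv, inv_inv] at hfx
  have hinv := (isIntegral_leadingCoeff_smul f x hfx).smul ((hunit.unit⁻¹ : Aˣ) : A)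
  rwa [smul_smul, hunit.val_inv_mul, one_smul] at hinv

theorem exists_valuationSubring_of_not_isIntegral {K : Type*} [Field K] [Algebra A K] {x : K}
    (hx : ¬ IsIntegral A x) :
    ∃ W : ValuationSubring K, (∀ a : A, algebraMap A K a ∈ W) ∧
      (∀ a ∈ (⊥ : Ideal A).jacobson, algebraMap A K a ∈ W.nonunits) ∧ x⁻¹ ∈ W.nonunits := by
  have hx0 : x ≠ 0 := by
    rintro rfl
    exact hx isIntegral_zero
  let S := Algebra.adjoin A {x⁻¹}
  let y : S := ⟨x⁻¹, Algebra.self_mem_adjoin_singleton A x⁻¹⟩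
  obtain ⟨W, hSW, hW⟩ := Ideal.image_subset_nonunits_valuationSubring (A := S.toSubring) _
    (mt (isIntegral_of_idealMap_adjoin_inv_sup_span_eq_top le_rfl hx0) hx)
  refine ⟨W, fun a => hSW (S.algebraMap_mem a), fun a ha => ?_, ?_⟩
  · exact hW ⟨algebraMap A S a, Ideal.mem_sup_left (Ideal.mem_map_of_mem _ ha), rfl⟩
  · exact hW ⟨y, Ideal.mem_sup_right (Ideal.mem_span_singleton_self y), rfl⟩

-- If no monic polynomial over `A` kills `x`, some prime of `B` avoids all their values at `x`.
theorem isIntegral_of_forall_residueField {B : Type*} [CommRing B] [Algebra A B] {x : B}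
    (h : ∀ (q : Ideal B) [q.IsPrime], IsIntegral A (algebraMap B q.ResidueField x)) :
    IsIntegral A x := by
  by_contra hx
  let M : Submonoid B :=
    { carrier := {b | ∃ f : Polynomial A, f.Monic ∧ Polynomial.aeval x f = b}
      one_mem' := ⟨1, Polynomial.monic_one, map_one _⟩
      mul_mem' := by
        rintro _ _ ⟨f, hf, rfl⟩ ⟨g, hg, rfl⟩
        exact ⟨f * g, hf.mul hg, map_mul _ _ _⟩ }
  have hM : Disjoint ((⊥ : Ideal B) : Set B) M := by
    rw [Set.disjoint_left]
    rintro _ rfl ⟨f, hf, hfx⟩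
    exact hx ⟨f, hf, hfx⟩
  obtain ⟨q, hq, -, hqM⟩ := Ideal.exists_le_prime_disjoint _ M hM
  obtain ⟨f, hf, hfx⟩ := h q
  rw [← Polynomial.aeval_def, Polynomial.aeval_algebraMap_apply,
    Ideal.algebraMap_residueField_eq_zero] at hfx
  exact Set.disjoint_left.mp hqM hfx ⟨f, hf, rfl⟩

theorem isIntegral_algebraMap_of_forall_mem {R K : Type*} [CommRing R] [CommRing K] [Algebra R A]
    [Algebra R K] [Algebra A K] [IsScalarTower R A K] [Algebra.IsIntegral R A] {S : Subring K}
    (hS : ∀ r : R, algebraMap R K r ∈ S) (a : A) : IsIntegral S (algebraMap A K a) := by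
  let := ((algebraMap R K).codRestrict S hS).toAlgebra
  have : IsScalarTower R S K := .of_algebraMap_eq fun _ => rfl
  exact ((Algebra.IsIntegral.isIntegral (R := R) a).algebraMap (B := K)).tower_top

variable (R : Type*) [CommRing R] [IsNoetherianRing R] [Algebra R A] [Algebra.IsIntegral R A]
  {ϖ : A} {K : Type*} [Field K] [Algebra A K]

include R in
theorem exists_localSubring_krullDimLE_one_of_not_isIntegral
    (hϖ : ϖ ∈ (⊥ : Ideal A).jacobson) (g : A) {x : K} (hx : ¬ IsIntegral A x) :
    ∃ D : LocalSubring K, Ring.KrullDimLE 1 D.toSubring ∧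
      (∀ a : A, IsIntegral D.toSubring (algebraMap A K a)) ∧
      algebraMap A K g ∈ D.toSubring ∧ {algebraMap A K ϖ, x⁻¹} ⊆
        Subtype.val '' (IsLocalRing.maximalIdeal D.toSubring : Set D.toSubring) := by
  obtain ⟨W, hAW, hJW, hxW⟩ := exists_valuationSubring_of_not_isIntegral hx
  let := ((algebraMap A K).comp (algebraMap R A)).toAlgebra
  have : IsScalarTower R A K := .of_algebraMap_eq fun _ => rfl
  let T : Subalgebra R K := Algebra.adjoin R {algebraMap A K g}
  have : IsNoetherianRing T.toSubring :=
    isNoetherianRing_of_fg (Subalgebra.fg_def.mpr ⟨_, Set.finite_singleton _, rfl⟩)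
  have hTW : T.toSubring ≤ W.toSubring :=
    adjoin_toSubring_le (fun r => hAW (algebraMap R A r)) (Set.singleton_subset_iff.mpr (hAW g))
  obtain ⟨D, hTD, hdim, hD⟩ := exists_localSubring_krullDimLE_one hTW (hJW ϖ hϖ) hxW
  exact ⟨D, hdim, isIntegral_algebraMap_of_forall_mem fun r => hTD (T.algebraMap_mem r),
    hTD (Algebra.self_mem_adjoin_singleton R _), hD⟩

variable {g : A}

include R in
theorem isIntegral_of_forall_mem_powerBoundedOn_of_field
    (hϖ : ϖ ∈ (⊥ : Ideal A).jacobson) (hϖ0 : algebraMap A K ϖ ≠ 0) (hg0 : algebraMap A K g ≠ 0)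
    {x : K}
    (hx : ∀ j, 0 < j → x ∈ powerBoundedOn A (algebraMap A K ϖ) (algebraMap A K g)⁻¹ j) :
    IsIntegral A x := by
  by_contra hxint
  have hx0 : x⁻¹ ≠ 0 := inv_ne_zero fun h => hxint (h ▸ isIntegral_zero)
  obtain ⟨D, hdim, hA, hgD, hD⟩ :=
    exists_localSubring_krullDimLE_one_of_not_isIntegral R hϖ g hxint
  obtain ⟨⟨d, hd, hdϖ⟩, ⟨u, hu, hux⟩⟩ := Set.pair_subset_iff.mp hD
  obtain ⟨j, hj, hxj⟩ := exists_inv_notMem_powerBoundedOn (γ := ⟨_, hgD⟩) hA hd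
    (fun h => hϖ0 (by rw [← hdϖ, h]; rfl)) hu (fun h => hx0 (by rw [← hux, h]; rfl))
    (fun h => hg0 (congrArg Subtype.val h))
  refine hxj ?_
  rw [show algebraMap D.toSubring K d = algebraMap A K ϖ from hdϖ,
    show algebraMap D.toSubring K u = x⁻¹ from hux, inv_inv]
  exact hx j hj

variable {B : Type*} [CommRing B] [Algebra A B]

include R in
theorem isIntegral_of_forall_mem_powerBoundedOn
    (hϖ : ϖ ∈ (⊥ : Ideal A).jacobson) (hϖB : IsUnit (algebraMap A B ϖ)) {ginv : B}
    (hginv : ginv * algebraMap A B g = 1) {x : B}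
    (hx : ∀ j, 0 < j → x ∈ powerBoundedOn A (algebraMap A B ϖ) ginv j) : IsIntegral A x := by
  refine isIntegral_of_forall_residueField fun q _ => ?_
  have hϖ0 : algebraMap A q.ResidueField ϖ ≠ 0 := by
    rw [IsScalarTower.algebraMap_apply A B]
    exact (hϖB.map _).ne_zero
  have hginv' : algebraMap B q.ResidueField ginv * algebraMap A q.ResidueField g = 1 := by
    rw [IsScalarTower.algebraMap_apply A B, ← map_mul, hginv, map_one]
  refine isIntegral_of_forall_mem_powerBoundedOn_of_field R (g := g) hϖ hϖ0
    (right_ne_zero_of_mul_eq_one hginv') fun j hj => ?_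
  have h := map_mem_powerBoundedOn (IsScalarTower.toAlgHom A B q.ResidueField) (hx j hj)
  simpa only [IsScalarTower.coe_toAlgHom', ← IsScalarTower.algebraMap_apply A B,
    eq_inv_of_mul_eq_one_left hginv'] using h

variable [IsLocalization.Away (ϖ * g) B]

include R in
theorem isIntegral_tfae_mem_powerBoundedOn (hϖ : ϖ ∈ (⊥ : Ideal A).jacobson)
    {ginv : B} (hginv : ginv * algebraMap A B g = 1) (x : B) :
    [IsIntegral A x, IsAlmostIntegralElem A x,
      ∀ j, 0 < j → x ∈ powerBoundedOn A (algebraMap A B ϖ) ginv j].TFAE := by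
  have hϖB : IsUnit (algebraMap A B ϖ) := by
    have h := IsLocalization.Away.algebraMap_isUnit (S := B) (ϖ * g)
    rw [map_mul] at h
    exact isUnit_of_mul_isUnit_left h
  tfae_have 1 → 2 := isAlmostIntegralElem_of_isIntegral
  tfae_have 2 → 3 := fun h j _ => h.mem_powerBoundedOn hginv j
  tfae_have 3 → 1 := isIntegral_of_forall_mem_powerBoundedOn R hϖ hϖB hginv
  tfae_finish

include R in
theorem wittPerfectRiemannExtension_integralClosure_general (hϖ : ϖ ∈ (⊥ : Ideal A).jacobson)
    {ginv : B} (hginv : ginv * algebraMap A B g = 1) {q : ℕ} (hq : 1 < q) {r : ℕ → A}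
    (hr0 : r 0 = g) (hr : ∀ n, r (n + 1) ^ q = r n) :
    (integralClosure A B : Set B) = {x | IsAlmostIntegralElem A x} ∧
    {x | IsAlmostIntegralElem A x}
      = ⋂ j : ℕ, ⋂ (_ : 0 < j), powerBoundedOn A (algebraMap A B ϖ) ginv j ∧
    (IsCompletelyIntegrallyClosedIn A B →
      Set.range (algebraMap A B)
        = ⋂ j : ℕ, ⋂ (_ : 0 < j), powerBoundedOn A (algebraMap A B ϖ) ginv j ∧
      Set.range (algebraMap A B)
        = {x | (∃ (a : A) (m : ℕ), algebraMap A B g ^ m * x = algebraMap A B a) ∧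
            ∀ n, 0 < n → algebraMap A B (r n) * x ∈ Set.range (algebraMap A B)}) := by
  have htfae := isIntegral_tfae_mem_powerBoundedOn R hϖ hginv
  have hInter : {x | IsAlmostIntegralElem A x}
      = ⋂ j : ℕ, ⋂ (_ : 0 < j), powerBoundedOn A (algebraMap A B ϖ) ginv j := by
    ext x
    simpa only [Set.mem_iInter] using (htfae x).out 1 2
  refine ⟨Set.ext fun x => (htfae x).out 0 1, hInter, fun hcic =>
    ⟨hcic.range_algebraMap.trans hInter, Set.ext fun x => ?_⟩⟩
  have hroot := hcic.mem_range_iff_forall_root_mul_mem hq hr (hr0 ▸ hginv) (x := x)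
  refine ⟨fun hx => ⟨?_, hroot.mp hx⟩, fun hx => hroot.mpr hx.2⟩
  obtain ⟨a, rfl⟩ := hx
  exact ⟨a, 0, by rw [pow_zero, one_mul]⟩

end Integrality

/-- **Witt-perfect Riemann extension theorem, part (c).**  Under the hypotheses
of Theorem 4.7 of Nakazato–Shimomoto, inside `A[1/(pg)]`, the integral closure of `A` equals
the complete integral closure of `A`, and both coincide with `⋂_{j>0} A^{j∘}`.  If moreover
`A` is completely integrally closed in `A[1/(pg)]`, then `A = ⋂_{j>0} A^{j∘}` and
`A = {x ∈ A[1/g] : g^{1/p^n}·x ∈ A for all n > 0}`. -/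
theorem wittPerfectRiemannExtension_integralClosure.{u}
    (p : ℕ) (hp : p.Prime)
    (V : Type u) [CommRing V] [IsDomain V] [ValuationRing V]
    (hVdim : ringKrullDim V = 1)
    (hVtf : (p : V) ∈ nonZeroDivisors V)
    (hVW : IsWittPerfect p V)
    (prV : ℕ → V) (hprV0 : prV 0 = (p : V)) (hprV : ∀ n, prV (n + 1) ^ p = prV n)
    (A : Type u) [CommRing A] [Algebra V A] [Module.Flat V A]
    (hAtf : (p : A) ∈ nonZeroDivisors A)
    (g : A) (hg : g ∈ nonZeroDivisors A)
    (gr : ℕ → A) (hgr0 : gr 0 = g) (hgr : ∀ n, gr (n + 1) ^ p = gr n)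
    -- (1) A is p-adically Zariskian and completely integrally closed in A[1/p]
    (hZar : (p : A) ∈ (⊥ : Ideal A).jacobson)
    (Ap : Type u) [CommRing Ap] [Algebra A Ap] [IsLocalization.Away (p : A) Ap]
    (hcic : IsCompletelyIntegrallyClosedIn A Ap)
    -- (2) A is (pg)^{1/p^∞}-almost Witt-perfect and integral over a Noetherian subring
    (hAWP : IsAlmostWittPerfect p (fun n => algebraMap V A (prV n) * gr n))
    (hNoeth : ∃ R : Subring A, IsNoetherianRing ↥R ∧ ∀ x : A, IsIntegral ↥R x)
    -- (3) (p, g) is a regular sequence on A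
    (hreg : ∀ x : A, g * x ∈ Ideal.span {(p : A)} → x ∈ Ideal.span {(p : A)})
    -- the localization A[1/(pg)] and the inverse of g in it
    (Apg : Type u) [CommRing Apg] [Algebra A Apg] [IsLocalization.Away ((p : A) * g) Apg]
    (ginv : Apg) (hginv : ginv * algebraMap A Apg g = 1) :
    -- the integral closure of A in A[1/(pg)] equals the complete integral closure of A there
    (integralClosure A Apg : Set Apg) = {x : Apg | IsAlmostIntegralElem A x} ∧
    -- and both are equal to ⋂_{j>0} A^{j∘}
    ({x : Apg | IsAlmostIntegralElem A x}
      = ⋂ j : ℕ, ⋂ (_ : 0 < j),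
          {x : Apg | ∃ m : ℕ, ∀ n : ℕ,
            (algebraMap A Apg (p : A)) ^ m * x ^ n ∈
              Algebra.adjoin A {(algebraMap A Apg (p : A)) ^ j * ginv}}) ∧
    -- moreover, if A is completely integrally closed in A[1/(pg)], then
    (IsCompletelyIntegrallyClosedIn A Apg →
      -- A = ⋂_{j>0} A^{j∘}
      (Set.range (algebraMap A Apg)
        = ⋂ j : ℕ, ⋂ (_ : 0 < j),
            {x : Apg | ∃ m : ℕ, ∀ n : ℕ,
              (algebraMap A Apg (p : A)) ^ m * x ^ n ∈
                Algebra.adjoin A {(algebraMap A Apg (p : A)) ^ j * ginv}}) ∧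
      -- A = g^{-1/p^∞}A = {x ∈ A[1/g] : g^{1/p^n}·x ∈ A for all n > 0}
      Set.range (algebraMap A Apg)
        = {x : Apg | (∃ (a : A) (m : ℕ), (algebraMap A Apg g) ^ m * x = algebraMap A Apg a) ∧
            ∀ n : ℕ, 0 < n → algebraMap A Apg (gr n) * x ∈ Set.range (algebraMap A Apg)}) := by
  obtain ⟨R, _, hR⟩ := hNoeth
  have : Algebra.IsIntegral R A := ⟨hR⟩
  exact wittPerfectRiemannExtension_integralClosure_general R hZar hginv hp.one_lt hgr0 hgr
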